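/- Let ℓ ∈ ℕ and σ ∈ (1/2, 1) be fixed. Then ∫_0^T |ζ^{(ℓ)}(σ + it)|² dt ∼ ζ^{(2ℓ)}(2σ) · T as T → ∞. -/

import Mathlib

open Filter

section
open MeasureTheory FourierTransform SchwartzMap

lemma aux_fourier_ae_eq (g : ℝ → ℂ) (h1 : Integrable g) (h2 : MemLp g 2) :
    𝓕 g =ᵐ[volume] ((𝓕 (h2.toLp g) : Lp ℂ 2 (volume : Measure ℝ)) : ℝ → ℂ) := by
  have hc : Continuous (𝓕 g) := 
    VectorFourier.fourierIntegral_continuous Real.continuous_fourierChar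
      (by exact continuous_inner) h1
  refine ae_eq_of_integral_contDiff_smul_eq hc.locallyIntegrable ?_ ?_
  · exact (Lp.memLp _).locallyIntegrable (by norm_num)
  · intro φ hφ hs
    have hφ' : ContDiff ℝ (⊤ : ℕ∞) (fun x => (φ x : ℂ)) := Complex.ofRealCLM.contDiff.comp hφ
    have hs' : HasCompactSupport (fun x => (φ x : ℂ)) := hs.comp_left (g := fun x : ℝ => (x : ℂ)) (by simp)
    let Φ : 𝓢(ℝ, ℂ) := hs'.toSchwartzMap hφ'
    have e1 : 𝓕 ((h2.toLp g : Lp ℂ 2 (volume : Measure ℝ)) : 𝓢'(ℝ, ℂ)) Φ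
       = ((𝓕 (h2.toLp g) : Lp ℂ 2 (volume : Measure ℝ)) : 𝓢'(ℝ, ℂ)) Φ := by
      rw [Lp.fourier_toTemperedDistribution_eq]
    rw [TemperedDistribution.fourier_apply, Lp.toTemperedDistribution_apply,
      Lp.toTemperedDistribution_apply] at e1
    have e2 : ∀ x, Φ x = (φ x : ℂ) := fun x => rfl
    have e3 : ∫ x, φ x • 𝓕 g x = ∫ x, Φ x • 𝓕 g x := by
      congr 1
    have e4 : ∫ x, φ x • ((𝓕 (h2.toLp g) : Lp ℂ 2 (volume : Measure ℝ)) : ℝ → ℂ) x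
      = ∫ x, Φ x • ((𝓕 (h2.toLp g) : Lp ℂ 2 (volume : Measure ℝ)) : ℝ → ℂ) x := by
      congr 1
    rw [e3, e4, ← e1]
    have e5 := VectorFourier.integral_fourierIntegral_smul_eq_flip (e := Real.fourierChar)
      (μ := volume) (ν := volume) (L := innerₗ ℝ) (f := (Φ : ℝ → ℂ)) (g := g)
      Real.continuous_fourierChar (by exact continuous_inner) Φ.integrable h1
    rw [flip_innerₗ] at e5
    have e6 : ∫ x, (𝓕 Φ) x • (h2.toLp g) x = ∫ x, (𝓕 Φ) x • g x := by
      apply integral_congr_ae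
      filter_upwards [h2.coeFn_toLp] with x hx
      rw [hx]
    rw [e6]
    exact e5.symm

lemma aux_plancherel (g : ℝ → ℂ) (h1 : Integrable g) (h2 : MemLp g 2) :
    Integrable (fun x => ‖𝓕 g x‖ ^ 2) ∧ ∫ x, ‖𝓕 g x‖ ^ 2 = ∫ x, ‖g x‖ ^ 2 := by
  have hae := aux_fourier_ae_eq g h1 h2
  have hm : MemLp (𝓕 g) 2 := (memLp_congr_ae hae).2 (Lp.memLp _)
  have hn : eLpNorm (𝓕 g) 2 volume = eLpNorm g 2 volume := by
    rw [eLpNorm_congr_ae hae]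
    have := Lp.norm_fourier_eq (h2.toLp g)
    rw [Lp.norm_def, Lp.norm_def, eLpNorm_congr_ae h2.coeFn_toLp] at this
    exact (ENNReal.toReal_eq_toReal_iff' (Lp.memLp _).2.ne h2.2.ne).1 this
  refine ⟨hm.integrable_norm_pow (by norm_num), ?_⟩
  have k1 := hm.eLpNorm_eq_integral_rpow_norm (by norm_num) (by norm_num)
  have k2 := h2.eLpNorm_eq_integral_rpow_norm (by norm_num) (by norm_num)
  rw [k1, k2] at hn
  have p1 : 0 ≤ ∫ x, ‖𝓕 g x‖ ^ 2 := integral_nonneg fun _ => by positivity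
  have p2 : 0 ≤ ∫ x, ‖g x‖ ^ 2 := integral_nonneg fun _ => by positivity
  simp only [ENNReal.toReal_ofNat, Real.rpow_ofNat] at hn
  rw [ENNReal.ofReal_eq_ofReal_iff (by positivity) (by positivity)] at hn
  exact (Real.rpow_left_inj p1 p2 (by norm_num)).1 hn
end

section
open MeasureTheory Set Complex

noncomputable def auxB : ℝ → ℂ := indicator (Ioi 1) (fun u : ℝ => ((Int.fract u : ℝ) : ℂ))

lemma auxB_meas : Measurable auxB := by
  unfold auxB
  exact (Complex.measurable_ofReal.comp measurable_fract).indicator measurableSet_Ioi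

lemma auxB_le (u : ℝ) : ‖auxB u‖ ≤ 1 := by
  unfold auxB
  by_cases h : u ∈ Ioi (1:ℝ)
  · rw [indicator_of_mem h, Complex.norm_real, Real.norm_eq_abs, abs_of_nonneg (Int.fract_nonneg u)]
    exact (Int.fract_lt_one u).le
  · rw [indicator_of_notMem h]; simp

lemma auxB_loc : LocallyIntegrableOn auxB (Ioi 0) := by
  have : LocallyIntegrable (fun _ : ℝ => (1:ℝ)) := locallyIntegrable_const 1
  apply LocallyIntegrable.locallyIntegrableOn
  exact this.mono auxB_meas.aestronglyMeasurable (by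
    filter_upwards with u
    simpa using auxB_le u)

lemma auxB_top : auxB =O[atTop] (fun x : ℝ => x ^ (-(0:ℝ))) := by
  simp only [neg_zero, Real.rpow_zero]
  exact Asymptotics.isBigO_of_le _ (fun u => by simpa using auxB_le u)

lemma auxB_bot (b : ℝ) : auxB =O[nhdsWithin 0 (Ioi 0)] (fun x : ℝ => x ^ (-b)) := by
  apply Asymptotics.IsBigO.of_bound 1
  have : ∀ᶠ x : ℝ in nhdsWithin 0 (Ioi 0), x < 1 := 
    mem_nhdsWithin_of_mem_nhds (Iio_mem_nhds one_pos)
  filter_upwards [this] with x hx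
  have : auxB x = 0 := by
    unfold auxB
    rw [indicator_of_notMem]
    simpa using hx.le
  rw [this]; simp

lemma auxB_conv {s : ℂ} (hs : 0 < s.re) : MellinConvergent auxB (-s) :=
  mellinConvergent_of_isBigO_rpow auxB_loc auxB_top (by simpa using hs) (auxB_bot (-s.re - 1))
    (by simp)

lemma auxB_diff {s : ℂ} (hs : 0 < s.re) : DifferentiableAt ℂ (fun s => mellin auxB (-s)) s := by
  have : DifferentiableAt ℂ (mellin auxB) (-s) :=
    mellin_differentiableAt_of_isBigO_rpow auxB_loc auxB_top (by simpa using hs)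
      (auxB_bot (-s.re - 1)) (by simp)
  exact this.comp s differentiable_neg.differentiableAt

lemma aux_zeta_gt_one {s : ℂ} (hs : 1 < s.re) :
    riemannZeta s = s / (s - 1) - s * mellin auxB (-s) := by
  have hs1 : s - 1 ≠ 0 := fun h => by
    rw [sub_eq_zero] at h; rw [h] at hs; simp at hs
  have h1 : LSeries (fun _ => 1) s = s * ∫ t in Set.Ioi (1 : ℝ), (∑ k ∈ Finset.Icc 1 ⌊t⌋₊, (1:ℂ)) * t ^ (-(s + 1)) := by
    refine LSeries_eq_mul_integral' (fun _ => 1) zero_le_one hs ?_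
    simp only [norm_one, Finset.sum_const, Nat.card_Icc, nsmul_eq_mul, mul_one, Real.rpow_one,
      add_tsub_cancel_right]
    exact Asymptotics.isBigO_refl _ _
  have h2 : LSeries (fun _ => 1) s = riemannZeta s := LSeries_one_eq_riemannZeta hs
  rw [← h2, h1]
  have h3 : mellin auxB (-s) = ∫ t in Ioi (1:ℝ), ((t:ℂ) ^ (-s - 1)) • ((Int.fract t : ℝ) : ℂ) := by
    unfold mellin auxB
    simp_rw [← indicator_smul]
    rw [setIntegral_indicator measurableSet_Ioi]
    congr 2
    ext x; simp
  have h3i : IntegrableOn (fun t : ℝ => ((t:ℂ) ^ (-s - 1)) • ((Int.fract t : ℝ) : ℂ)) (Ioi 1) := by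
    have := auxB_conv (s := s) (by linarith)
    unfold MellinConvergent auxB at this
    have h4 := this.mono_set (Ioi_subset_Ioi (zero_le_one : (0:ℝ) ≤ 1))
    refine h4.congr_fun (fun x hx => ?_) measurableSet_Ioi
    simp only [indicator_of_mem hx]
  have h5 : ∫ t in Ioi (1:ℝ), (t:ℂ) ^ (-s) = 1 / (s - 1) := by
    rw [integral_Ioi_cpow_of_lt (by simpa using hs) one_pos]
    have hs2 : -s + 1 ≠ 0 := by intro h; apply hs1; linear_combination -h
    simp only [Complex.ofReal_one, Complex.one_cpow]
    rw [div_eq_div_iff hs2 hs1]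
    ring
  have h5i : IntegrableOn (fun t : ℝ => (t:ℂ) ^ (-s)) (Ioi 1) :=
    integrableOn_Ioi_cpow_of_lt (by simpa using hs) one_pos
  rw [h3]
  have h6 : ∫ t in Set.Ioi (1 : ℝ), (∑ k ∈ Finset.Icc 1 ⌊t⌋₊, (1:ℂ)) * t ^ (-(s + 1))
     = ∫ t in Set.Ioi (1 : ℝ), ((t:ℂ) ^ (-s) - ((t:ℂ) ^ (-s - 1)) • ((Int.fract t : ℝ) : ℂ)) := by
    apply setIntegral_congr_fun measurableSet_Ioi
    intro t ht
    have ht0 : (0:ℝ) < t := lt_trans one_pos ht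
    have ht0' : (t:ℂ) ≠ 0 := by exact_mod_cast ht0.ne'
    have hf : ((⌊t⌋₊ : ℕ) : ℂ) = (t:ℂ) - ((Int.fract t : ℝ) : ℂ) := by
      have : ((⌊t⌋₊ : ℕ) : ℝ) = t - Int.fract t := by
        rw [natCast_floor_eq_intCast_floor ht0.le, Int.self_sub_fract]
      rw [← Complex.ofReal_natCast, this, Complex.ofReal_sub]
    simp only [Finset.sum_const, Nat.card_Icc, add_tsub_cancel_right, nsmul_eq_mul, mul_one, smul_eq_mul]
    rw [hf]
    have : (t:ℂ) ^ (-s) = t * (t:ℂ) ^ (-s - 1) := by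
      rw [Complex.cpow_sub _ _ ht0', Complex.cpow_one]; field_simp
    rw [this, show -(s+1) = -s - 1 by ring]; ring
  rw [h6, integral_sub h5i h3i, h5]
  ring

lemma aux_zeta_pos {s : ℂ} (hs : 0 < s.re) (hs1 : s ≠ 1) :
    riemannZeta s = s / (s - 1) - s * mellin auxB (-s) := by
  have hU : IsOpen {s : ℂ | 0 < s.re} := isOpen_lt continuous_const Complex.continuous_re
  have hf : AnalyticOnNhd ℂ riemannZeta₁ {s : ℂ | 0 < s.re} :=
    (differentiable_riemannZeta₁.differentiableOn).analyticOnNhd hU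
  have hg : AnalyticOnNhd ℂ (fun s => s - s * (s - 1) * mellin auxB (-s)) {s : ℂ | 0 < s.re} := by
    apply DifferentiableOn.analyticOnNhd _ hU
    intro z hz
    apply DifferentiableAt.differentiableWithinAt
    have := auxB_diff hz
    fun_prop
  have hpc : IsPreconnected {s : ℂ | 0 < s.re} := (convex_halfSpace_re_gt 0).isPreconnected
  have key : EqOn riemannZeta₁ (fun s => s - s * (s - 1) * mellin auxB (-s)) {s : ℂ | 0 < s.re} := by
    apply hf.eqOn_of_preconnected_of_eventuallyEq hg hpc (z₀ := 2) (by simp)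
    have : ∀ᶠ z : ℂ in nhds 2, 1 < z.re := by
      apply (isOpen_lt continuous_const Complex.continuous_re).mem_nhds
      simp
    filter_upwards [this] with z hz
    have hz1 : z ≠ 1 := fun h => by rw [h] at hz; simp at hz
    have hz2 : z - 1 ≠ 0 := sub_ne_zero.2 hz1
    have h1 := riemannZeta_eq_inv_sub_mul hz1
    rw [aux_zeta_gt_one hz] at h1
    have : riemannZeta₁ z = (z - 1) * ((z - 1)⁻¹ * riemannZeta₁ z) := by field_simp
    rw [this, ← h1]
    field_simp
  have hz2 : s - 1 ≠ 0 := sub_ne_zero.2 hs1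
  rw [riemannZeta_eq_inv_sub_mul hs1, key hs]
  field_simp

/-- Mellin transform of the fractional part. -/
lemma aux_fract_mellin {s : ℂ} (hs : 0 < s.re) (hs1 : s.re < 1) :
    HasMellin (fun u : ℝ => ((Int.fract u : ℝ) : ℂ)) (-s) (-(riemannZeta s / s)) := by
  have hne : s ≠ 1 := fun h => by rw [h] at hs1; simp at hs1
  have hne0 : s ≠ 0 := fun h => by rw [h] at hs; simp at hs
  have hm1 : s - 1 ≠ 0 := sub_ne_zero.2 hne
  have hm1' : 1 - s ≠ 0 := sub_ne_zero.2 hne.symm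
  have h1 := hasMellin_cpow_Ioc 1 (s := -s) (by simpa using hs1)
  have h2 := hasMellin_add h1.1 (auxB_conv hs)
  have hae : ∀ᵐ u : ℝ ∂(volume.restrict (Ioi 0)), 
     (indicator (Ioc 0 1) (fun t => (t:ℂ) ^ (1:ℂ) : ℝ → ℂ) u + auxB u) = ((Int.fract u : ℝ) : ℂ) := by
    have : ∀ᵐ u : ℝ ∂(volume.restrict (Ioi 0)), u ≠ 1 := by
      apply ae_restrict_of_ae
      simp [ae_iff]
    filter_upwards [this, ae_restrict_mem measurableSet_Ioi] with u hu hu0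
    rcases lt_or_gt_of_ne hu with h | h
    · have hu0' : 0 < u := hu0
      rw [indicator_of_mem (by exact ⟨hu0, h.le⟩)]
      unfold auxB
      rw [indicator_of_notMem (by simpa using h.le), Int.fract_eq_self.2 ⟨hu0'.le, h⟩]
      simp
    · unfold auxB
      rw [indicator_of_notMem (by simp [h]), indicator_of_mem (by exact h)]
      simp
  have hae2 : (fun u : ℝ => (u:ℂ) ^ (-s - 1) • (indicator (Ioc 0 1) (fun t => (t:ℂ) ^ (1:ℂ) : ℝ → ℂ) u + auxB u)) =ᵐ[volume.restrict (Ioi 0)] fun u => (u:ℂ) ^ (-s - 1) • ((Int.fract u : ℝ) : ℂ) := by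
    filter_upwards [hae] with u hu
    rw [hu]
  refine ⟨?_, ?_⟩
  · exact (integrable_congr hae2).1 h2.1
  · have e : mellin (fun u : ℝ => ((Int.fract u : ℝ) : ℂ)) (-s) = _ := (integral_congr_ae hae2).symm.trans h2.2
    rw [e, h1.2, aux_zeta_pos hs hne]
    have : -s + 1 ≠ 0 := by rwa [neg_add_eq_sub]
    field_simp
    ring
end
section
open MeasureTheory Set Complex

noncomputable def auxE (N : ℕ) (u : ℝ) : ℝ :=
  -Int.fract u - ∑ n ∈ Finset.Icc 1 N, indicator (Ici (n:ℝ)) (fun _ => (1:ℝ)) u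

lemma auxE_meas (N : ℕ) : Measurable (auxE N) := by
  unfold auxE
  refine measurable_fract.neg.sub (Finset.measurable_fun_sum _ fun n _ => ?_)
  exact measurable_const.indicator measurableSet_Ici

lemma aux_ind_mellin {s : ℂ} (hs : 0 < s.re) (n : ℕ) (hn : 1 ≤ n) :
    HasMellin (indicator (Ici (n:ℝ)) (fun _ => (1:ℂ))) (-s) ((n:ℂ) ^ (-s) / s) := by
  have hn0 : (0:ℝ) < n := by exact_mod_cast hn
  have hne0 : s ≠ 0 := fun h => by rw [h] at hs; simp at hs
  have e : (fun u : ℝ => (u:ℂ) ^ (-s - 1) • indicator (Ici (n:ℝ)) (fun _ => (1:ℂ)) u)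
      = indicator (Ici (n:ℝ)) (fun u : ℝ => (u:ℂ) ^ (-s - 1)) := by
    ext u
    by_cases h : u ∈ Ici (n:ℝ)
    · rw [indicator_of_mem h, indicator_of_mem h]; simp
    · rw [indicator_of_notMem h, indicator_of_notMem h]; simp
  have hsub : Ici (n:ℝ) ⊆ Ioi 0 := fun x hx => lt_of_lt_of_le hn0 hx
  have hi : IntegrableOn (fun u : ℝ => (u:ℂ) ^ (-s - 1)) (Ici (n:ℝ)) := by
    rw [integrableOn_Ici_iff_integrableOn_Ioi]
    exact integrableOn_Ioi_cpow_of_lt (by simp; linarith) hn0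
  refine ⟨?_, ?_⟩
  · unfold MellinConvergent
    rw [e]
    exact ((integrable_indicator_iff measurableSet_Ici).2 hi).integrableOn
  · unfold mellin
    rw [e, setIntegral_indicator measurableSet_Ici, inter_eq_self_of_subset_right hsub,
      integral_Ici_eq_integral_Ioi, integral_Ioi_cpow_of_lt (by simp; linarith) hn0]
    simp only [sub_add_cancel, Complex.ofReal_natCast]
    rw [div_neg, neg_div, neg_neg]

lemma auxE_mellin {s : ℂ} (hs : 0 < s.re) (hs1 : s.re < 1) (N : ℕ) :
    HasMellin (fun u => (auxE N u : ℂ)) (-s)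
      ((riemannZeta s - ∑ n ∈ Finset.Icc 1 N, (n:ℂ) ^ (-s)) / s) := by
  have hne0 : s ≠ 0 := fun h => by rw [h] at hs; simp at hs
  induction N with
  | zero =>
    have h := aux_fract_mellin hs hs1
    have h2 := hasMellin_const_smul h.1 (-1 : ℂ)
    rw [h.2] at h2
    convert h2 using 1
    · ext u; simp [auxE]
    · simp
  | succ N ih =>
    have h := aux_ind_mellin hs (N+1) (by omega)
    have h2 := hasMellin_sub ih.1 h.1
    rw [ih.2, h.2] at h2
    convert h2 using 1
    · ext u
      simp only [auxE]
      rw [Finset.sum_Icc_succ_top (by omega)]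
      by_cases hu : u ∈ Ici (((N+1 : ℕ):ℝ))
      · simp only [indicator_of_mem hu]; push_cast; ring
      · simp only [indicator_of_notMem hu]; push_cast; ring
    · rw [Finset.sum_Icc_succ_top (by omega)]
      ring

noncomputable def auxD (N : ℕ) (h u : ℝ) : ℝ := auxE N (Real.exp h * u) - auxE N u

lemma auxD_meas (N : ℕ) (h : ℝ) : Measurable (auxD N h) := by
  unfold auxD
  exact ((auxE_meas N).comp (measurable_const_mul _)).sub (auxE_meas N)

lemma auxD_mellin {s : ℂ} (hs : 0 < s.re) (hs1 : s.re < 1) (N : ℕ) (h : ℝ) :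
    HasMellin (fun u => (auxD N h u : ℂ)) (-s)
      ((Complex.exp (h * s) - 1) * ((riemannZeta s - ∑ n ∈ Finset.Icc 1 N, (n:ℂ) ^ (-s)) / s)) := by
  have h1 := auxE_mellin hs hs1 N
  have hpos := Real.exp_pos h
  have h2 := (MellinConvergent.comp_mul_left (f := fun u => (auxE N u : ℂ)) (s := -s) hpos).2 h1.1
  have h3 := mellin_comp_mul_left (fun u => (auxE N u : ℂ)) (-s) hpos
  have h4 := hasMellin_sub h2 h1.1
  rw [h3, h1.2] at h4
  convert h4 using 1
  · ext u; simp [auxD]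
  · have : (((Real.exp h : ℝ) : ℂ)) ^ (- -s) = Complex.exp (h * s) := by
      rw [neg_neg, Complex.ofReal_exp, Complex.cpow_def_of_ne_zero (Complex.exp_ne_zero _),
        ← Complex.ofReal_exp, ← Complex.ofReal_log (Real.exp_pos h).le, Real.log_exp]
    rw [this, smul_eq_mul]; ring

lemma auxD_bound_large (N : ℕ) {h u : ℝ} (hh : 0 < h) (hu0 : 0 < u) (hu : (N:ℝ) ≤ u) :
    auxD N h u ^ 2 ≤ 1 := by
  have h1 : u ≤ Real.exp h * u := by
    have := Real.one_le_exp hh.le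
    nlinarith
  have key : ∀ v : ℝ, (N:ℝ) ≤ v → 
      ∑ n ∈ Finset.Icc 1 N, indicator (Ici (n:ℝ)) (fun _ => (1:ℝ)) v = N := by
    intro v hv
    rw [Finset.sum_congr rfl (g := fun _ => (1:ℝ))]
    · simp
    · intro n hn
      rw [indicator_of_mem]
      have : (n:ℝ) ≤ N := by exact_mod_cast (Finset.mem_Icc.1 hn).2
      exact this.trans hv
  unfold auxD auxE
  rw [key _ hu, key _ (hu.trans h1)]
  have a1 := Int.fract_nonneg u
  have a2 := Int.fract_lt_one u
  have a3 := Int.fract_nonneg (Real.exp h * u)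
  have a4 := Int.fract_lt_one (Real.exp h * u)
  nlinarith

lemma aux_floor_sum {v : ℝ} (hv : 0 ≤ v) {K : ℕ} (hK : v ≤ K) :
    ∑ n ∈ Finset.Icc 1 K, indicator (Ici (n:ℝ)) (fun _ => (1:ℝ)) v = v - Int.fract v := by
  rw [Int.self_sub_fract, ← natCast_floor_eq_intCast_floor hv]
  simp only [indicator_apply, mem_Ici]
  rw [Finset.sum_boole]
  congr 1
  have : (Finset.Icc 1 K).filter (fun x : ℕ => (x:ℝ) ≤ v) = Finset.Icc 1 ⌊v⌋₊ := by
    ext x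
    simp only [Finset.mem_filter, Finset.mem_Icc]
    rw [Nat.le_floor_iff hv]
    constructor
    · rintro ⟨⟨a, b⟩, c⟩; exact ⟨a, c⟩
    · rintro ⟨a, b⟩; exact ⟨⟨a, by exact_mod_cast b.trans hK⟩, b⟩
  rw [this]; simp

lemma auxD_bound_small (N K : ℕ) {h u : ℝ} (hh : 0 < h) (hh1 : h ≤ 1) (hu0 : 0 < u) (hu : u ≤ 1 / h)
    (hNK : N ≤ K) (hK : Real.exp h * u ≤ K) :
    auxD N h u ^ 2 ≤ 8 * h ^ 2 * u ^ 2 + 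
      6 * ∑ n ∈ Finset.Ioc N K, indicator (Ico (n * Real.exp (-h)) (n:ℝ)) (fun _ => (1:ℝ)) u := by
  have he : Real.exp h - 1 ≤ 2 * h := by
    have := Real.abs_exp_sub_one_le (x := h) (by rw [abs_of_pos hh]; exact hh1)
    rw [abs_of_pos hh] at this
    exact (le_abs_self _).trans this
  have he1 := Real.one_le_exp hh.le
  have h1 : u ≤ Real.exp h * u := by nlinarith
  have huh : u * h ≤ 1 := by rwa [le_div_iff₀ hh] at hu
  set c : ℝ := ∑ n ∈ Finset.Ioc N K, indicator (Ico (n * Real.exp (-h)) (n:ℝ)) (fun _ => (1:ℝ)) u with hc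
  have split : ∀ v : ℝ, 0 ≤ v → v ≤ K → auxE N v = 
      ∑ n ∈ Finset.Ioc N K, indicator (Ici (n:ℝ)) (fun _ => (1:ℝ)) v - v := by
    intro v hv hvK
    unfold auxE
    have := aux_floor_sum hv hvK
    have e : Finset.Icc 1 K = Finset.Icc 1 N ∪ Finset.Ioc N K := by
      ext x; simp only [Finset.mem_Icc, Finset.mem_union, Finset.mem_Ioc]; omega
    rw [e, Finset.sum_union] at this
    · linarith
    · rw [Finset.disjoint_left]
      intro x hx hx'
      rw [Finset.mem_Icc] at hx; rw [Finset.mem_Ioc] at hx'; omega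
  have indeq : ∀ n : ℕ, indicator (Ici (n:ℝ)) (fun _ => (1:ℝ)) (Real.exp h * u) - 
      indicator (Ici (n:ℝ)) (fun _ => (1:ℝ)) u = 
      indicator (Ico (n * Real.exp (-h)) (n:ℝ)) (fun _ => (1:ℝ)) u := by
    intro n
    have e : (n:ℝ) * Real.exp (-h) ≤ u ↔ (n:ℝ) ≤ Real.exp h * u := by
      rw [Real.exp_neg, ← div_eq_mul_inv, div_le_iff₀ (Real.exp_pos h), mul_comm]
    simp only [indicator_apply, mem_Ici, mem_Ico, e]
    by_cases a : (n:ℝ) ≤ u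
    · simp [a, a.trans h1, not_lt.2 a]
    · simp [a, not_le.1 a]
  have hD : auxD N h u = c - (Real.exp h - 1) * u := by
    unfold auxD
    rw [split _ (by positivity) hK, split u hu0.le (h1.trans hK), hc,
      ← Finset.sum_congr rfl (fun n _ => indeq n), Finset.sum_sub_distrib]
    ring
  have hc0 : 0 ≤ c := Finset.sum_nonneg fun n _ => indicator_nonneg (fun _ _ => zero_le_one) _
  have hc3 : c ≤ 3 := by
    have : c ≤ ∑ n ∈ Finset.Icc 1 K, indicator (Ico (n * Real.exp (-h)) (n:ℝ)) (fun _ => (1:ℝ)) u := by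
      apply Finset.sum_le_sum_of_subset_of_nonneg
      · intro x hx; rw [Finset.mem_Ioc] at hx; rw [Finset.mem_Icc]; omega
      · intro n _ _; exact indicator_nonneg (fun _ _ => zero_le_one) _
    rw [← Finset.sum_congr rfl (fun n _ => indeq n), Finset.sum_sub_distrib,
      aux_floor_sum (by positivity) hK, aux_floor_sum hu0.le (h1.trans hK)] at this
    have a2 := Int.fract_lt_one u
    have a3 := Int.fract_nonneg (Real.exp h * u)
    nlinarith
  rw [hD]
  have hau : (Real.exp h - 1) * u ≤ 2 * h * u := by nlinarith
  have hau0 : 0 ≤ (Real.exp h - 1) * u := mul_nonneg (by linarith) hu0.le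
  have : ((Real.exp h - 1) * u) ^ 2 ≤ (2 * h * u) ^ 2 := pow_le_pow_left₀ hau0 hau 2
  nlinarith [sq_nonneg (c + (Real.exp h - 1) * u)]
end
section
open MeasureTheory Set

lemma aux_Ico_int {σ h : ℝ} (hσ : 1 / 2 < σ) (hσ1 : σ < 1) (hh : 0 < h) (hh1 : h ≤ 1) (n : ℕ)
    (hn : 1 ≤ n) :
    IntegrableOn (fun u : ℝ => u ^ (-2 * σ - 1)) (Ico (n * Real.exp (-h)) (n:ℝ)) ∧
    ∫ u in Ico (n * Real.exp (-h)) (n:ℝ), u ^ (-2 * σ - 1) ≤ Real.exp 3 * h * (n:ℝ) ^ (-2 * σ) := by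
  have hn0 : (0:ℝ) < n := by exact_mod_cast hn
  have hl0 : 0 < n * Real.exp (-h) := by positivity
  have hc : ContinuousOn (fun u : ℝ => u ^ (-2 * σ - 1)) (Icc (n * Real.exp (-h)) (n:ℝ)) := by
    intro u hu
    exact (Real.continuousAt_rpow_const _ _ (Or.inl (hl0.trans_le hu.1).ne')).continuousWithinAt
  refine ⟨hc.integrableOn_Icc.mono_set Ico_subset_Icc_self, ?_⟩
  have hb : ∀ u ∈ Ico (n * Real.exp (-h)) (n:ℝ), ‖u ^ (-2 * σ - 1)‖ ≤ 
      (n * Real.exp (-h)) ^ (-2 * σ - 1) := by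
    intro u hu
    have hu0 := hl0.trans_le hu.1
    rw [Real.norm_of_nonneg (by positivity)]
    exact Real.rpow_le_rpow_of_nonpos hl0 hu.1 (by linarith)
  have h1 := norm_setIntegral_le_of_norm_le_const (μ := volume) (by simp) hb
  refine (Real.le_norm_self _).trans (h1.trans ?_)
  have hle : (n:ℝ) * Real.exp (-h) ≤ n := by
    have := Real.exp_le_one_iff.2 (show -h ≤ 0 by linarith)
    nlinarith
  rw [Measure.real, Real.volume_Ico, ENNReal.toReal_ofReal (by linarith)]
  rw [Real.mul_rpow hn0.le (Real.exp_pos _).le, ← Real.exp_mul]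
  have e1 : Real.exp (-h * (-2 * σ - 1)) ≤ Real.exp 3 := by
    apply Real.exp_le_exp.2; nlinarith
  have e2 : (n:ℝ) - n * Real.exp (-h) ≤ n * h := by
    have := Real.add_one_le_exp (-h)
    nlinarith
  have e3 : (n:ℝ) ^ (-2 * σ) = (n:ℝ) ^ (-2 * σ - 1) * n := by
    rw [Real.rpow_sub_one hn0.ne']; field_simp
  rw [e3]
  have e4 : 0 < (n:ℝ) ^ (-2 * σ - 1) := by positivity
  calc (n:ℝ) ^ (-2 * σ - 1) * Real.exp (-h * (-2 * σ - 1)) * (n - n * Real.exp (-h))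
      ≤ (n:ℝ) ^ (-2 * σ - 1) * Real.exp 3 * (n * h) := by gcongr
    _ = _ := by ring

lemma auxD_int (N : ℕ) {σ h : ℝ} (hσ : 1 / 2 < σ) (hσ1 : σ < 1) (hh : 0 < h) (hh1 : h ≤ 1)
    (hN : (N:ℝ) ≤ 1 / h) :
    IntegrableOn (fun u : ℝ => auxD N h u ^ 2 * u ^ (-2 * σ - 1)) (Ioi 0) ∧
    ∫ u in Ioi (0:ℝ), auxD N h u ^ 2 * u ^ (-2 * σ - 1) ≤ 
      h ^ (2 * σ) * (8 / (2 - 2 * σ) + 1) + 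
      6 * Real.exp 3 * h * ∑ n ∈ Finset.Ioc N ⌈3 / h⌉₊, (n:ℝ) ^ (-2 * σ) := by
  set K := ⌈3 / h⌉₊ with hK
  have h1h : 0 < 1 / h := by positivity
  have hK3 : 3 / h ≤ K := Nat.le_ceil _
  have hNK : N ≤ K := by
    have : (N:ℝ) ≤ K := hN.trans (le_trans (by gcongr; norm_num) hK3)
    exact_mod_cast this
  have i1 : IntegrableOn (fun u : ℝ => 8 * h ^ 2 * u ^ (1 - 2 * σ)) (Ioc 0 (1 / h)) := by
    apply Integrable.const_mul
    exact (intervalIntegral.intervalIntegrable_rpow' (by linarith)).1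
  have v1 : ∫ u in Ioc 0 (1 / h), 8 * h ^ 2 * u ^ (1 - 2 * σ) = h ^ (2 * σ) * (8 / (2 - 2 * σ)) := by
    rw [integral_const_mul, ← intervalIntegral.integral_of_le h1h.le, integral_rpow (Or.inl (by linarith)),
      Real.zero_rpow (by linarith), sub_zero, one_div, Real.inv_rpow hh.le,
      show 1 - 2 * σ + 1 = 2 - 2 * σ by ring, Real.rpow_sub hh, Real.rpow_two]
    have : 0 < h ^ (2 * σ) := by positivity
    have : 2 - 2 * σ ≠ 0 := by linarith
    field_simp
  have i2 : IntegrableOn (fun u : ℝ => u ^ (-2 * σ - 1)) (Ioi (1 / h)) :=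
    integrableOn_Ioi_rpow_of_lt (by linarith) h1h
  have v2 : ∫ u in Ioi (1 / h), u ^ (-2 * σ - 1) ≤ h ^ (2 * σ) := by
    rw [integral_Ioi_rpow_of_lt (by linarith) h1h, sub_add_cancel, one_div, Real.inv_rpow hh.le,
      ← Real.rpow_neg hh.le]
    rw [show -(-2 * σ) = 2 * σ by ring, show -2 * σ = -(2 * σ) by ring, neg_div_neg_eq]
    exact div_le_self (by positivity) (by linarith)
  let B : ℝ → ℝ := fun u => indicator (Ioc 0 (1 / h)) (fun u : ℝ => 8 * h ^ 2 * u ^ (1 - 2 * σ)) u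
    + indicator (Ioi (1 / h)) (fun u : ℝ => u ^ (-2 * σ - 1)) u
    + 6 * ∑ n ∈ Finset.Ioc N K, indicator (Ico (n * Real.exp (-h)) (n:ℝ)) (fun u : ℝ => u ^ (-2 * σ - 1)) u
  have j1 : Integrable (indicator (Ioc 0 (1 / h)) (fun u : ℝ => 8 * h ^ 2 * u ^ (1 - 2 * σ))) :=
    (integrable_indicator_iff measurableSet_Ioc).2 i1
  have j2 : Integrable (indicator (Ioi (1 / h)) (fun u : ℝ => u ^ (-2 * σ - 1))) :=
    (integrable_indicator_iff measurableSet_Ioi).2 i2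
  have j3 : ∀ n ∈ Finset.Ioc N K, Integrable (fun u => 
      indicator (Ico (n * Real.exp (-h)) (n:ℝ)) (fun u : ℝ => u ^ (-2 * σ - 1)) u) := by
    intro n hn
    rw [Finset.mem_Ioc] at hn
    exact (integrable_indicator_iff measurableSet_Ico).2 (aux_Ico_int hσ hσ1 hh hh1 n (by omega)).1
  have j4 : Integrable (fun u => ∑ n ∈ Finset.Ioc N K, indicator (Ico (n * Real.exp (-h)) (n:ℝ)) (fun u : ℝ => u ^ (-2 * σ - 1)) u) :=
    integrable_finsetSum _ j3
  have jB : Integrable B := (j1.add j2).add (j4.const_mul 6)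
  have hle : ∀ u ∈ Ioi (0:ℝ), auxD N h u ^ 2 * u ^ (-2 * σ - 1) ≤ B u := by
    intro u hu
    have hu0 : 0 < u := hu
    have hp : 0 < u ^ (-2 * σ - 1) := by positivity
    by_cases hc : u ≤ 1 / h
    · have hexp : Real.exp h ≤ 3 := (Real.exp_le_exp.2 hh1).trans Real.exp_one_lt_three.le
      have := auxD_bound_small N K hh hh1 hu0 hc hNK (by
        refine le_trans ?_ hK3
        calc Real.exp h * u ≤ 3 * (1 / h) := by gcongr
          _ = 3 / h := by ring)
      have h2 := mul_le_mul_of_nonneg_right this hp.le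
      refine h2.trans (le_of_eq ?_)
      simp only [B]
      rw [indicator_of_mem (by exact ⟨hu0, hc⟩), indicator_of_notMem (by simpa using hc), add_zero,
        add_mul]
      congr 1
      · rw [show u ^ (1 - 2 * σ) = u ^ 2 * u ^ (-2 * σ - 1) by
          rw [← Real.rpow_two, ← Real.rpow_add hu0]; congr 1; ring]
        ring
      · rw [mul_assoc, Finset.sum_mul]
        congr 1
        apply Finset.sum_congr rfl
        intro n _
        simp only [indicator_apply]
        split_ifs <;> simp
    · push Not at hc
      have := auxD_bound_large N hh hu0 (hN.trans hc.le)
      have c : 0 ≤ ∑ n ∈ Finset.Ioc N K, indicator (Ico (n * Real.exp (-h)) (n:ℝ)) (fun u : ℝ => u ^ (-2 * σ - 1)) u :=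
        Finset.sum_nonneg fun n _ => by rw [indicator_apply]; split_ifs <;> positivity
      simp only [B]
      rw [indicator_of_notMem (by simp only [mem_Ioc, not_and, not_le]; intro _; exact hc),
        indicator_of_mem (by exact hc)]
      nlinarith
  have hDint : IntegrableOn (fun u : ℝ => auxD N h u ^ 2 * u ^ (-2 * σ - 1)) (Ioi 0) := by
    refine Integrable.mono' jB.integrableOn ?_ ?_
    · exact (((auxD_meas N h).pow_const 2).mul (measurable_id.pow_const _)).aestronglyMeasurable
    · filter_upwards [ae_restrict_mem measurableSet_Ioi] with u hu
      have hu0 : 0 < u := hu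
      rw [Real.norm_of_nonneg (by positivity)]
      exact hle u hu
  refine ⟨hDint, ?_⟩
  calc ∫ u in Ioi (0:ℝ), auxD N h u ^ 2 * u ^ (-2 * σ - 1) 
      ≤ ∫ u in Ioi (0:ℝ), B u := setIntegral_mono_on hDint jB.integrableOn measurableSet_Ioi hle
    _ = (∫ u in Ioi (0:ℝ), indicator (Ioc 0 (1 / h)) (fun u : ℝ => 8 * h ^ 2 * u ^ (1 - 2 * σ)) u)
       + (∫ u in Ioi (0:ℝ), indicator (Ioi (1 / h)) (fun u : ℝ => u ^ (-2 * σ - 1)) u)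
       + 6 * ∑ n ∈ Finset.Ioc N K, ∫ u in Ioi (0:ℝ), indicator (Ico (n * Real.exp (-h)) (n:ℝ)) (fun u : ℝ => u ^ (-2 * σ - 1)) u := by
        simp only [B]
        have jj : IntegrableOn (fun u => indicator (Ioc 0 (1 / h)) (fun u : ℝ => 8 * h ^ 2 * u ^ (1 - 2 * σ)) u
            + indicator (Ioi (1 / h)) (fun u : ℝ => u ^ (-2 * σ - 1)) u) (Ioi 0) :=
          j1.integrableOn.add j2.integrableOn
        rw [integral_add jj (j4.integrableOn.const_mul 6), 
          integral_add j1.integrableOn j2.integrableOn,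
          integral_const_mul, integral_finsetSum _ (fun n hn => (j3 n hn).integrableOn)]
    _ ≤ h ^ (2 * σ) * (8 / (2 - 2 * σ)) + h ^ (2 * σ) + 6 * ∑ n ∈ Finset.Ioc N K, Real.exp 3 * h * (n:ℝ) ^ (-2 * σ) := by
        gcongr with n hn
        · rw [setIntegral_indicator measurableSet_Ioc, inter_eq_self_of_subset_right Ioc_subset_Ioi_self, v1]
        · rw [setIntegral_indicator measurableSet_Ioi, inter_eq_self_of_subset_right (Ioi_subset_Ioi h1h.le)]
          exact v2
        · rw [Finset.mem_Ioc] at hn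
          have hn0 : (0:ℝ) < n := by
            have : 0 < n := by omega
            exact_mod_cast this
          have hsub : Ico (n * Real.exp (-h)) (n:ℝ) ⊆ Ioi 0 := fun x hx => 
            lt_of_lt_of_le (by positivity) hx.1
          rw [setIntegral_indicator measurableSet_Ico, inter_eq_self_of_subset_right hsub]
          exact (aux_Ico_int hσ hσ1 hh hh1 n (by omega)).2
    _ = _ := by rw [← Finset.mul_sum]; ring
end
section
open MeasureTheory Set FourierTransform

lemma aux_exp_cov (F : ℝ → ℝ) :
    (IntegrableOn F (Ioi 0) ↔ Integrable (fun v : ℝ => Real.exp (-v) * F (Real.exp (-v)))) ∧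
    ∫ u in Ioi (0:ℝ), F u = ∫ v : ℝ, Real.exp (-v) * F (Real.exp (-v)) := by
  have hd : ∀ x ∈ univ, HasDerivWithinAt (Real.exp ∘ Neg.neg) (-Real.exp (-x)) univ x :=
    fun x _ => mul_neg_one (Real.exp (-x)) ▸
      ((Real.hasDerivAt_exp (-x)).comp x (hasDerivAt_neg x)).hasDerivWithinAt
  have him : Real.exp ∘ Neg.neg '' univ = Ioi 0 := by
    rw [Set.image_comp, Set.image_univ_of_surjective neg_surjective, Set.image_univ, Real.range_exp]
  have hinj : univ.InjOn (Real.exp ∘ Neg.neg) :=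
    Real.exp_injective.injOn.comp neg_injective.injOn (univ.mapsTo_univ _)
  constructor
  · rw [← him, integrableOn_image_iff_integrableOn_abs_deriv_smul MeasurableSet.univ hd hinj]
    simp
  · rw [← him, integral_image_eq_integral_abs_deriv_smul MeasurableSet.univ hd hinj]
    simp

lemma aux_mellin_int (f : ℝ → ℂ) (σ : ℝ) (hf : MellinConvergent f (σ : ℂ)) :
    Integrable (fun u : ℝ => Real.exp (-σ * u) • f (Real.exp (-u))) := by
  have hd : ∀ x ∈ univ, HasDerivWithinAt (Real.exp ∘ Neg.neg) (-Real.exp (-x)) univ x :=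
    fun x _ => mul_neg_one (Real.exp (-x)) ▸
      ((Real.hasDerivAt_exp (-x)).comp x (hasDerivAt_neg x)).hasDerivWithinAt
  have him : Real.exp ∘ Neg.neg '' univ = Ioi 0 := by
    rw [Set.image_comp, Set.image_univ_of_surjective neg_surjective, Set.image_univ, Real.range_exp]
  have hinj : univ.InjOn (Real.exp ∘ Neg.neg) :=
    Real.exp_injective.injOn.comp neg_injective.injOn (univ.mapsTo_univ _)
  rw [MellinConvergent, ← him, integrableOn_image_iff_integrableOn_abs_deriv_smul
      MeasurableSet.univ hd hinj, integrableOn_univ] at hf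
  refine hf.congr (Eventually.of_forall fun x => ?_)
  have h0 : (0:ℝ) < Real.exp (-x) := Real.exp_pos _
  simp only [Function.comp]
  rw [abs_neg, abs_of_pos h0]
  have : ((Real.exp (-x) : ℝ) : ℂ) ^ ((σ:ℂ) - 1) = ((Real.exp (-x) ^ (σ - 1) : ℝ) : ℂ) := by
    rw [Complex.ofReal_cpow h0.le]; simp
  rw [this, ← Real.exp_mul]
  rw [Complex.real_smul, Complex.real_smul, smul_eq_mul, ← mul_assoc, ← Complex.ofReal_mul, ← Real.exp_add]
  congr 3
  ring

lemma aux_ms_one (N : ℕ) {σ h T : ℝ} (hσ : 1 / 2 < σ) (hσ1 : σ < 1) (hh : 0 < h) (hh1 : h ≤ 1 / 4)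
    (hN : (N:ℝ) ≤ 1 / h) (hT : h * T ≤ 1 / 4) :
    ∫ t in Icc (-T) T, ‖riemannZeta (σ + t * Complex.I) - 
        ∑ n ∈ Finset.Icc 1 N, (n:ℂ) ^ (-(σ + t * Complex.I))‖ ^ 2 ≤
      4 / h ^ 2 * (2 * Real.pi * ∫ u in Ioi (0:ℝ), auxD N h u ^ 2 * u ^ (-2 * σ - 1)) := by
  have hpi := Real.pi_pos
  set g : ℝ → ℂ := fun v => Real.exp (-(-σ) * v) • (auxD N h (Real.exp (-v)) : ℂ) with hg
  have hDint := auxD_int N hσ hσ1 hh (by linarith) hN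
  have hcov := aux_exp_cov (fun u => auxD N h u ^ 2 * u ^ (-2 * σ - 1))
  have heq : (fun v : ℝ => Real.exp (-v) * (auxD N h (Real.exp (-v)) ^ 2 * Real.exp (-v) ^ (-2 * σ - 1)))
      = fun v => ‖g v‖ ^ 2 := by
    ext v
    rw [hg]
    simp only [norm_smul, Complex.norm_real, mul_pow, Real.norm_eq_abs, sq_abs]
    rw [← Real.exp_mul, mul_left_comm, ← Real.exp_add, ← Real.exp_nat_mul, mul_comm]
    congr 2
    push_cast
    ring
  rw [heq] at hcov
  have hgm : Measurable g := by
    have a1 : Measurable (fun v : ℝ => Real.exp (-(-σ) * v)) := by fun_prop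
    have a2 : Measurable (fun v : ℝ => (auxD N h (Real.exp (-v)) : ℂ)) :=
      Complex.measurable_ofReal.comp ((auxD_meas N h).comp (by fun_prop))
    exact a1.smul a2
  have hg1 : Integrable g := by
    have := (auxD_mellin (s := (σ:ℂ)) (by simp; linarith) (by simpa using hσ1) N h).1
    rw [← Complex.ofReal_neg] at this
    exact aux_mellin_int _ _ this
  have hg2 : MemLp g 2 := by
    rw [memLp_two_iff_integrable_sq_norm hgm.aestronglyMeasurable]
    exact hcov.1.1 hDint.1
  obtain ⟨hP1, hP2⟩ := aux_plancherel g hg1 hg2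
  have hw : Integrable (fun t : ℝ => ‖𝓕 g (t * (-1 / (2 * Real.pi)))‖ ^ 2) :=
    hP1.comp_mul_right' (by simp [hpi.ne'])
  have hwi : ∫ t : ℝ, ‖𝓕 g (t * (-1 / (2 * Real.pi)))‖ ^ 2 = 2 * Real.pi * ∫ x, ‖𝓕 g x‖ ^ 2 := by
    rw [Measure.integral_comp_mul_right (fun x => ‖𝓕 g x‖ ^ 2), smul_eq_mul]
    congr 1
    rw [abs_inv, abs_div, abs_neg, abs_one, abs_of_pos (by positivity)]
    simp
  rw [hcov.2, ← hP2, ← hwi, ← integral_const_mul]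
  have hpt : ∀ t ∈ Icc (-T) T, ‖riemannZeta (σ + t * Complex.I) - 
        ∑ n ∈ Finset.Icc 1 N, (n:ℂ) ^ (-(σ + t * Complex.I))‖ ^ 2 ≤ 
        4 / h ^ 2 * ‖𝓕 g (t * (-1 / (2 * Real.pi)))‖ ^ 2 := by
    intro t ht
    set s : ℂ := σ + t * Complex.I with hs
    have hre : s.re = σ := by simp [hs]
    have him : s.im = t := by simp [hs]
    have hm := (auxD_mellin (s := s) (by rw [hre]; linarith) (by rw [hre]; exact hσ1) N h).2
    rw [mellin_eq_fourier] at hm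
    simp only [Complex.neg_re, Complex.neg_im, hre, him] at hm
    have e : -t / (2 * Real.pi) = t * (-1 / (2 * Real.pi)) := by ring
    rw [e] at hm
    rw [hg, hm]
    set f := riemannZeta s - ∑ n ∈ Finset.Icc 1 N, (n:ℂ) ^ (-s) with hf
    have hs0 : s ≠ 0 := fun h0 => by rw [h0] at hre; simp at hre; linarith
    have hsn : 0 < ‖s‖ := norm_pos_iff.2 hs0
    have hsl : ‖s‖ ≤ σ + |t| := by
      refine (norm_add_le _ _).trans ?_
      simp [abs_of_pos (show 0 < σ by linarith)]
    have htT : |t| ≤ T := abs_le.2 ht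
    have hx : ‖(h:ℂ) * s‖ = h * ‖s‖ := by
      rw [norm_mul, Complex.norm_real, Real.norm_of_nonneg hh.le]
    have hx2 : ‖(h:ℂ) * s‖ ≤ 1 / 2 := by
      rw [hx]; nlinarith
    have hx3 := Complex.norm_exp_sub_one_sub_id_le (x := (h:ℂ) * s) (by linarith)
    have hx4 : h / 2 * ‖s‖ ≤ ‖Complex.exp (h * s) - 1‖ := by
      have := norm_sub_norm_le ((h:ℂ) * s) ((h:ℂ) * s - (Complex.exp (h * s) - 1))
      rw [sub_sub_cancel, norm_sub_rev ((h:ℂ) * s)] at this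
      nlinarith [norm_nonneg ((h:ℂ) * s)]
    have hx5 : h / 2 * ‖f‖ ≤ ‖(Complex.exp (h * s) - 1) * (f / s)‖ := by
      rw [norm_mul, norm_div, mul_div_assoc', le_div_iff₀ hsn]
      nlinarith [norm_nonneg f]
    have hx6 := pow_le_pow_left₀ (by positivity) hx5 2
    calc ‖f‖ ^ 2 = 4 / h ^ 2 * (h / 2 * ‖f‖) ^ 2 := by field_simp; norm_num
      _ ≤ _ := by gcongr
  calc _ ≤ ∫ t in Icc (-T) T, 4 / h ^ 2 * ‖𝓕 g (t * (-1 / (2 * Real.pi)))‖ ^ 2 := by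
        apply integral_mono_of_nonneg
        · exact Eventually.of_forall fun _ => by positivity
        · exact (hw.const_mul _).integrableOn
        · filter_upwards [ae_restrict_mem measurableSet_Icc] with t ht using hpt t ht
    _ ≤ _ := setIntegral_le_integral (hw.const_mul _) (Eventually.of_forall fun _ => by positivity)

noncomputable def auxR (σ : ℝ) (N : ℕ) : ℝ := ∑' k : ℕ, (((k + (N + 1) : ℕ)) : ℝ) ^ (-2 * σ)

lemma auxR_tendsto (σ : ℝ) : Tendsto (auxR σ) atTop (nhds 0) := by
  have := tendsto_sum_nat_add (fun n : ℕ => (n:ℝ) ^ (-2 * σ))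
  exact this.comp (tendsto_add_atTop_nat 1)

lemma auxR_le {σ σ' : ℝ} (hσ : 1 / 2 < σ) (hσ' : σ ≤ σ') (N K : ℕ) :
    ∑ n ∈ Finset.Ioc N K, (n:ℝ) ^ (-2 * σ') ≤ auxR σ N := by
  have hsum : Summable (fun n : ℕ => (n:ℝ) ^ (-2 * σ)) := Real.summable_nat_rpow.2 (by linarith)
  have hsum2 := (summable_nat_add_iff (N + 1)).2 hsum
  have e : Finset.Ioc N K = Finset.Ico (N + 1) (K + 1) := by
    ext; simp only [Finset.mem_Ioc, Finset.mem_Ico]; omega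
  rw [e, Finset.sum_Ico_eq_sum_range]
  refine le_trans ?_ (hsum2.sum_le_tsum (Finset.range (K + 1 - (N + 1))) (fun _ _ => by positivity))
  apply Finset.sum_le_sum
  intro i _
  rw [add_comm]
  apply Real.rpow_le_rpow_of_exponent_le
  · exact_mod_cast (by omega : 1 ≤ i + (N + 1))
  · linarith

noncomputable def auxC (σ : ℝ) : ℝ := 128 * Real.pi * (8 / (2 - 2 * σ) + 1 + 6 * Real.exp 3)

lemma auxC_pos {σ : ℝ} (h : σ < 1) : 0 < auxC σ := by
  unfold auxC
  have : 0 < 2 - 2 * σ := by linarith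
  positivity

lemma auxR_nonneg (σ : ℝ) (N : ℕ) : 0 ≤ auxR σ N := tsum_nonneg fun _ => by positivity

lemma aux_ms_two (N : ℕ) {σ₁ σ₂ σ T : ℝ} (h1 : 1 / 2 < σ₁) (h2 : σ₂ < 1) (hσ1 : σ₁ ≤ σ) (hσ2 : σ ≤ σ₂)
    (hT : 1 ≤ T) (hN : (N:ℝ) ≤ T) :
    ∫ t in Icc (-T) T, ‖riemannZeta (σ + t * Complex.I) - 
        ∑ n ∈ Finset.Icc 1 N, (n:ℂ) ^ (-(σ + t * Complex.I))‖ ^ 2 ≤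
      auxC σ₂ * (T ^ (2 - 2 * σ₁) + T * auxR σ₁ N) := by
  have hpi := Real.pi_pos
  have hT0 : 0 < T := by linarith
  set h := 1 / (4 * T) with hh
  have hh0 : 0 < h := by positivity
  have h1h : 1 / h = 4 * T := by rw [hh]; simp
  have hh1 : h ≤ 1 / 4 := by
    rw [hh]; apply one_div_le_one_div_of_le <;> linarith
  have hhT : h * T = 1 / 4 := by rw [hh]; field_simp
  have k1 := aux_ms_one N (σ := σ) (T := T) (by linarith) (by linarith) hh0 hh1 (by rw [h1h]; linarith) hhT.le
  have k2 := (auxD_int N (σ := σ) (h := h) (by linarith) (by linarith) hh0 (by linarith) (by rw [h1h]; linarith)).2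
  have k3 := auxR_le h1 hσ1 N ⌈3 / h⌉₊
  have k4 : h ^ (2 * σ) ≤ T ^ (-(2 * σ₁)) := by
    have : h ≤ T⁻¹ := by rw [hh, one_div]; apply inv_anti₀ hT0; linarith
    calc h ^ (2 * σ) ≤ (T⁻¹) ^ (2 * σ) := by
          apply Real.rpow_le_rpow hh0.le this; linarith
      _ = T ^ (-(2 * σ)) := by rw [Real.inv_rpow hT0.le, Real.rpow_neg hT0.le]
      _ ≤ _ := Real.rpow_le_rpow_of_exponent_le hT (by linarith)
  have k5 : 8 / (2 - 2 * σ) ≤ 8 / (2 - 2 * σ₂) := by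
    apply div_le_div_of_nonneg_left <;> linarith
  have k6 : 0 < 8 / (2 - 2 * σ₂) := div_pos (by norm_num) (by linarith)
  have k6' : 0 < 8 / (2 - 2 * σ) := div_pos (by norm_num) (by linarith)
  have hR := auxR_nonneg σ₁ N
  have e1 : 4 / h ^ 2 = 64 * T ^ 2 := by rw [hh]; field_simp; norm_num
  have e2 : T ^ (2 - 2 * σ₁) = T ^ 2 * T ^ (-(2 * σ₁)) := by
    rw [← Real.rpow_two, ← Real.rpow_add hT0]; congr 1
  have hp : 0 < T ^ (-(2 * σ₁)) := by positivity
  have he := Real.exp_pos 3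
  rw [e1] at k1
  refine k1.trans ?_
  calc 64 * T ^ 2 * (2 * Real.pi * ∫ u in Ioi (0:ℝ), auxD N h u ^ 2 * u ^ (-2 * σ - 1))
      ≤ 64 * T ^ 2 * (2 * Real.pi * (T ^ (-(2 * σ₁)) * (8 / (2 - 2 * σ₂) + 1) + 
        6 * Real.exp 3 * h * auxR σ₁ N)) := by
        gcongr
        refine k2.trans ?_
        gcongr
    _ = 128 * Real.pi * ((8 / (2 - 2 * σ₂) + 1) * T ^ (2 - 2 * σ₁) + 
        6 * Real.exp 3 * (T * (h * T)) * auxR σ₁ N) := by rw [e2]; ring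
    _ ≤ _ := by
        rw [hhT, auxC, mul_assoc (128 * Real.pi)]
        have q1 : 0 ≤ T ^ (2 - 2 * σ₁) := by positivity
        have q2 : 0 ≤ T * auxR σ₁ N := by positivity
        apply mul_le_mul_of_nonneg_left _ (by positivity)
        have q3 := mul_nonneg he.le q1
        have q4 := mul_nonneg he.le q2
        have q5 := mul_nonneg k6.le q2
        nlinarith
end
section
open MeasureTheory Set

lemma aux_mean_sq (g : ℝ → ℝ) (hg : Continuous g) :
    ((2 * Real.pi)⁻¹ * ∫ θ in (0:ℝ)..2 * Real.pi, g θ) ^ 2 ≤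
      (2 * Real.pi)⁻¹ * ∫ θ in (0:ℝ)..2 * Real.pi, g θ ^ 2 := by
  have hpi := Real.two_pi_pos
  set m := (2 * Real.pi)⁻¹ * ∫ θ in (0:ℝ)..2 * Real.pi, g θ with hm
  have h0 : 0 ≤ ∫ θ in (0:ℝ)..2 * Real.pi, (g θ - m) ^ 2 :=
    intervalIntegral.integral_nonneg hpi.le fun _ _ => sq_nonneg _
  have e : (fun θ => (g θ - m) ^ 2) = fun θ => (g θ ^ 2 - 2 * m * g θ) + m ^ 2 := by
    ext; ring
  rw [e, intervalIntegral.integral_add, intervalIntegral.integral_sub,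
    intervalIntegral.integral_const_mul, intervalIntegral.integral_const] at h0
  · have e2 : ∫ θ in (0:ℝ)..2 * Real.pi, g θ = 2 * Real.pi * m := by
      rw [hm]; field_simp
    rw [e2] at h0
    simp only [sub_zero, smul_eq_mul] at h0
    rw [inv_mul_eq_div, le_div_iff₀ hpi]
    nlinarith
  all_goals exact Continuous.intervalIntegrable (by fun_prop) _ _

lemma aux_cauchy {f : ℂ → ℂ} {c : ℂ} {R : ℝ} (n : ℕ) (hR : 0 < R)
    (hf : DiffContOnCl ℂ f (Metric.ball c R)) (hc : Continuous fun θ => f (circleMap c R θ)) :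
    ‖iteratedDeriv n f c‖ ^ 2 ≤ (n.factorial / R ^ n) ^ 2 *
      ((2 * Real.pi)⁻¹ * ∫ θ in (0:ℝ)..2 * Real.pi, ‖f (circleMap c R θ)‖ ^ 2) := by
  have h1 : iteratedDeriv n f c = n.factorial * (cauchyPowerSeries f c R n fun _ => 1) := by
    rw [cauchyPowerSeries_apply]
    have h := DiffContOnCl.circleIntegral_one_div_sub_center_pow_smul hR n hf
    have e : (∮ z in C(c, R), (1 / (z - c)) ^ n • (z - c)⁻¹ • f z) = ∮ z in C(c, R), (1 / (z - c) ^ (n + 1)) • f z := by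
      congr 1
      ext z
      simp only [smul_eq_mul, one_div, pow_succ, inv_pow, mul_inv]
      ring
    rw [e, h]
    have : (n.factorial : ℂ) ≠ 0 := by exact_mod_cast n.factorial_ne_zero
    have hpi : (Real.pi : ℂ) ≠ 0 := by exact_mod_cast Real.pi_ne_zero
    simp only [smul_eq_mul]
    field_simp [Complex.I_ne_zero]
  have h2 := norm_cauchyPowerSeries_le f c R n
  have h3 : ‖(cauchyPowerSeries f c R n fun _ => 1)‖ ≤ ‖cauchyPowerSeries f c R n‖ := by
    refine (ContinuousMultilinearMap.le_opNorm _ _).trans ?_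
    simp
  have h4 := aux_mean_sq (fun θ => ‖f (circleMap c R θ)‖) hc.norm
  rw [abs_of_pos hR] at h2
  calc ‖iteratedDeriv n f c‖ ^ 2 ≤ (n.factorial * (((2 * Real.pi)⁻¹ * ∫ θ : ℝ in 0..2 * Real.pi, ‖f (circleMap c R θ)‖) * R⁻¹ ^ n)) ^ 2 := by
        rw [h1, norm_mul, Complex.norm_natCast]
        gcongr
        exact h3.trans h2
    _ = (n.factorial / R ^ n) ^ 2 * ((2 * Real.pi)⁻¹ * ∫ θ : ℝ in 0..2 * Real.pi, ‖f (circleMap c R θ)‖) ^ 2 := by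
        rw [inv_pow]; ring
    _ ≤ _ := by gcongr

lemma aux_fub {G : ℝ → ℝ → ℝ} (hG : Continuous (Function.uncurry G)) {T B : ℝ}
    (hB : ∀ θ, ∫ t in (0:ℝ)..T, G t θ ≤ B) :
    ∫ t in (0:ℝ)..T, (∫ θ in (0:ℝ)..2 * Real.pi, G t θ) ≤ 2 * Real.pi * B := by
  have hpi := Real.two_pi_pos
  have hsw : ∫ t in (0:ℝ)..T, (∫ θ in (0:ℝ)..2 * Real.pi, G t θ)
      = ∫ θ in (0:ℝ)..2 * Real.pi, ∫ t in (0:ℝ)..T, G t θ := by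
    apply intervalIntegral_intervalIntegral_swap
    have : IntegrableOn (Function.uncurry G) (uIcc 0 T ×ˢ uIcc 0 (2 * Real.pi)) :=
      hG.continuousOn.integrableOn_compact (isCompact_uIcc.prod isCompact_uIcc)
    exact this.mono_set (prod_mono uIoc_subset_uIcc uIoc_subset_uIcc)
  have hcont : Continuous (fun θ : ℝ => ∫ t in (0:ℝ)..T, G t θ) := by
    apply intervalIntegral.continuous_parametric_intervalIntegral_of_continuous'
    exact hG.comp continuous_swap
  have hlast : (∫ θ in (0:ℝ)..2 * Real.pi, ∫ t in (0:ℝ)..T, G t θ)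
      ≤ ∫ θ in (0:ℝ)..2 * Real.pi, B :=
    intervalIntegral.integral_mono hpi.le (hcont.intervalIntegrable _ _) (by simp) hB
  rw [hsw]
  simpa using hlast

lemma aux_smooth {f : ℂ → ℂ} {σ r T B : ℝ} (n : ℕ) (hr : 0 < r) (h1 : 1 / 2 < σ - r) (h2 : σ + r < 1)
    (hT : 0 ≤ T) (hf : DifferentiableOn ℂ f {z | 1 / 2 < z.re ∧ z.re < 1})
    (hB : ∀ σ', σ - r ≤ σ' → σ' ≤ σ + r →
      ∫ t in Icc (-(T + r)) (T + r), ‖f (σ' + t * Complex.I)‖ ^ 2 ≤ B) :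
    ∫ t in Ioc 0 T, ‖iteratedDeriv n f (σ + t * Complex.I)‖ ^ 2 ≤ (n.factorial / r ^ n) ^ 2 * B := by
  have hpi := Real.two_pi_pos
  have hfc := hf.continuousOn
  have hmem : ∀ (t θ : ℝ), circleMap (σ + t * Complex.I) r θ ∈ {z : ℂ | 1 / 2 < z.re ∧ z.re < 1} := by
    intro t θ
    simp only [mem_ofPred_eq, circleMap, Complex.add_re, Complex.ofReal_re, Complex.mul_re, Complex.I_re,
      Complex.ofReal_im, Complex.exp_ofReal_mul_I_re, Complex.I_im]
    have := Real.neg_one_le_cos θ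
    have := Real.cos_le_one θ
    constructor <;> nlinarith
  have hF : Continuous (fun p : ℝ × ℝ => f (circleMap (σ + p.1 * Complex.I) r p.2)) := by
    apply hfc.comp_continuous
    · simp only [circleMap]; fun_prop
    · intro p; exact hmem _ _
  have hball : ∀ t : ℝ, DiffContOnCl ℂ f (Metric.ball (σ + t * Complex.I) r) := by
    intro t
    apply DifferentiableOn.diffContOnCl
    apply hf.mono
    refine Metric.closure_ball_subset_closedBall.trans ?_
    intro z hz
    rw [Metric.mem_closedBall, dist_eq_norm] at hz
    have := (Complex.abs_re_le_norm _).trans hz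
    simp at this
    rw [abs_le] at this
    simp only [mem_ofPred_eq]
    constructor <;> linarith
  have hpt : ∀ t : ℝ, ‖iteratedDeriv n f (σ + t * Complex.I)‖ ^ 2 ≤ (n.factorial / r ^ n) ^ 2 *
      ((2 * Real.pi)⁻¹ * ∫ θ in (0:ℝ)..2 * Real.pi, ‖f (circleMap (σ + t * Complex.I) r θ)‖ ^ 2) := by
    intro t
    apply aux_cauchy n hr (hball t)
    exact hF.comp (by fun_prop : Continuous fun θ : ℝ => (t, θ))
  have hF2 : Continuous (fun p : ℝ × ℝ => ‖f (circleMap (σ + p.1 * Complex.I) r p.2)‖ ^ 2) := hF.norm.pow 2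
  have hin : Continuous (fun t : ℝ => ∫ θ in (0:ℝ)..2 * Real.pi, ‖f (circleMap (σ + t * Complex.I) r θ)‖ ^ 2) := by
    apply intervalIntegral.continuous_parametric_intervalIntegral_of_continuous' hF2
  have hinner : ∀ θ : ℝ, ∫ t in (0:ℝ)..T, ‖f (circleMap (σ + t * Complex.I) r θ)‖ ^ 2 ≤ B := by
    intro θ
    have c1 := Real.neg_one_le_cos θ
    have c2 := Real.cos_le_one θ
    have s1 := Real.neg_one_le_sin θ
    have s2 := Real.sin_le_one θ
    set σ' := σ + r * Real.cos θ with hσ'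
    have e : ∀ t : ℝ, circleMap (σ + t * Complex.I) r θ = (σ':ℂ) + ((t + r * Real.sin θ : ℝ) : ℂ) * Complex.I := by
      intro t
      rw [circleMap, Complex.exp_mul_I, hσ']
      push_cast
      ring
    simp only [e]
    rw [intervalIntegral.integral_comp_add_right (fun u : ℝ => ‖f ((σ':ℂ) + (u : ℂ) * Complex.I)‖ ^ 2),
      intervalIntegral.integral_of_le (by linarith)]
    refine le_trans (setIntegral_mono_set ?_ ?_ ?_) (hB σ' (by nlinarith) (by nlinarith))
    · have : Continuous (fun u : ℝ => f ((σ':ℂ) + (u : ℂ) * Complex.I)) := by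
        apply hfc.comp_continuous (by fun_prop)
        intro u
        simp only [mem_ofPred_eq, Complex.add_re, Complex.ofReal_re, Complex.mul_re, Complex.I_re,
          Complex.ofReal_im, Complex.I_im]
        constructor <;> nlinarith
      exact (this.norm.pow 2).integrableOn_Icc
    · exact Eventually.of_forall fun _ => by positivity
    · apply LE.le.eventuallyLE
      intro x hx
      constructor <;> nlinarith [hx.1, hx.2]
  have hfub := aux_fub (G := fun t θ => ‖f (circleMap (σ + t * Complex.I) r θ)‖ ^ 2) hF2 hinner
  calc _ ≤ ∫ t in Ioc 0 T, (n.factorial / r ^ n) ^ 2 *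
      ((2 * Real.pi)⁻¹ * ∫ θ in (0:ℝ)..2 * Real.pi, ‖f (circleMap (σ + t * Complex.I) r θ)‖ ^ 2) := by
        apply integral_mono_of_nonneg
        · exact Eventually.of_forall fun _ => by positivity
        · exact ((hin.const_mul _).const_mul _).integrableOn_Ioc
        · exact Eventually.of_forall hpt
    _ = (n.factorial / r ^ n) ^ 2 * ((2 * Real.pi)⁻¹ * ∫ t in (0:ℝ)..T, ∫ θ in (0:ℝ)..2 * Real.pi, ‖f (circleMap (σ + t * Complex.I) r θ)‖ ^ 2) := by
        rw [integral_const_mul, integral_const_mul, intervalIntegral.integral_of_le hT]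
    _ ≤ (n.factorial / r ^ n) ^ 2 * ((2 * Real.pi)⁻¹ * (2 * Real.pi * B)) :=
        mul_le_mul_of_nonneg_left (mul_le_mul_of_nonneg_left hfub (by positivity)) (by positivity)
    _ = _ := by
        field_simp
end
section
open MeasureTheory Set

lemma aux_norm_sq (s : Finset ℕ) (b : ℕ → ℝ) (t : ℝ) :
    ‖∑ n ∈ s, (b n : ℂ) * Complex.exp (((-(t * Real.log n) : ℝ) : ℂ) * Complex.I)‖ ^ 2 =
      ∑ m ∈ s, ∑ n ∈ s, b m * b n * Real.cos ((Real.log m - Real.log n) * t) := by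
  rw [← Complex.normSq_eq_norm_sq, Complex.normSq_apply, Complex.re_sum, Complex.im_sum]
  simp only [Complex.re_ofReal_mul, Complex.im_ofReal_mul, Complex.exp_ofReal_mul_I_re,
    Complex.exp_ofReal_mul_I_im]
  rw [Finset.sum_mul_sum, Finset.sum_mul_sum, ← Finset.sum_add_distrib]
  refine Finset.sum_congr rfl fun m _ => ?_
  rw [← Finset.sum_add_distrib]
  refine Finset.sum_congr rfl fun n _ => ?_
  rw [sub_mul, Real.cos_sub, Real.cos_neg, Real.cos_neg, Real.sin_neg, Real.sin_neg,
    mul_comm (Real.log m), mul_comm (Real.log n)]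
  ring

lemma aux_cos_mean (c : ℝ) :
    Tendsto (fun T : ℝ => (∫ t in (0:ℝ)..T, Real.cos (c * t)) / T) atTop (nhds (if c = 0 then 1 else 0)) := by
  split_ifs with h
  · subst h
    refine tendsto_const_nhds.congr' ?_
    filter_upwards [eventually_gt_atTop 0] with T hT
    simp [hT.ne']
  · have e : ∀ T : ℝ, (∫ t in (0:ℝ)..T, Real.cos (c * t)) = c⁻¹ * Real.sin (c * T) := by
      intro T
      rw [intervalIntegral.integral_comp_mul_left _ h]
      simp
    simp only [e]
    apply squeeze_zero_norm' (a := fun T : ℝ => |c⁻¹| * T⁻¹)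
    · filter_upwards [eventually_gt_atTop 0] with T hT
      rw [Real.norm_eq_abs, abs_div, abs_mul, abs_of_pos hT, div_eq_mul_inv]
      have := Real.abs_sin_le_one (c * T)
      have h3 : |c⁻¹| * |Real.sin (c * T)| ≤ |c⁻¹| * 1 := by gcongr
      rw [mul_one] at h3
      gcongr
    · simpa using tendsto_inv_atTop_zero.const_mul |c⁻¹|

lemma aux_mv (N : ℕ) (b : ℕ → ℝ) :
    Tendsto (fun T : ℝ => (∫ t in Ioc 0 T, ‖∑ n ∈ Finset.Icc 1 N, (b n : ℂ) *
      Complex.exp (((-(t * Real.log n) : ℝ) : ℂ) * Complex.I)‖ ^ 2) / T) atTop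
      (nhds (∑ n ∈ Finset.Icc 1 N, b n ^ 2)) := by
  have h1 : Tendsto (fun T : ℝ => ∑ m ∈ Finset.Icc 1 N, ∑ n ∈ Finset.Icc 1 N, b m * b n * 
      ((∫ t in (0:ℝ)..T, Real.cos ((Real.log m - Real.log n) * t)) / T)) atTop
      (nhds (∑ m ∈ Finset.Icc 1 N, ∑ n ∈ Finset.Icc 1 N, b m * b n * 
        (if Real.log m - Real.log n = 0 then 1 else 0))) := by
    refine tendsto_finsetSum _ fun m _ => tendsto_finsetSum _ fun n _ => ?_
    exact (aux_cos_mean _).const_mul _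
  have h2 : (∑ m ∈ Finset.Icc 1 N, ∑ n ∈ Finset.Icc 1 N, b m * b n * 
        (if Real.log m - Real.log n = 0 then (1:ℝ) else 0)) = ∑ n ∈ Finset.Icc 1 N, b n ^ 2 := by
    refine Finset.sum_congr rfl fun m hm => ?_
    rw [Finset.sum_eq_single m]
    · simp; ring
    · intro n hn hne
      have : Real.log m - Real.log n ≠ 0 := by
        intro h
        rw [sub_eq_zero] at h
        rw [Finset.mem_Icc] at hm hn
        have := Real.log_injOn_pos (x₁ := (m:ℝ)) (x₂ := (n:ℝ)) (by simp; omega) (by simp; omega) h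
        exact hne (by exact_mod_cast this.symm)
      simp [this]
    · intro h; exact absurd hm h
  rw [h2] at h1
  refine h1.congr' ?_
  filter_upwards [eventually_gt_atTop 0] with T hT
  simp only [aux_norm_sq]
  rw [← intervalIntegral.integral_of_le hT.le, intervalIntegral.integral_finsetSum, Finset.sum_div]
  · refine Finset.sum_congr rfl fun m _ => ?_
    rw [intervalIntegral.integral_finsetSum, Finset.sum_div]
    · refine Finset.sum_congr rfl fun n _ => ?_
      rw [intervalIntegral.integral_const_mul, mul_div_assoc]
    · intro n _
      exact Continuous.intervalIntegrable (by fun_prop) _ _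
  · intro m _
    exact Continuous.intervalIntegrable (by fun_prop) _ _

noncomputable def auxP (N : ℕ) (s : ℂ) : ℂ := ∑ n ∈ Finset.Icc 1 N, (n:ℂ) ^ (-s)

lemma auxP_contDiff (N : ℕ) : ∀ n ∈ Finset.Icc 1 N, ∀ (k : ℕ) (s : ℂ), 
    ContDiffAt ℂ k (fun s : ℂ => (n:ℂ) ^ (-s)) s := by
  intro n hn k s
  have hn0 : (n:ℂ) ≠ 0 := by
    have := (Finset.mem_Icc.1 hn).1
    exact_mod_cast (by omega : n ≠ 0)
  have e : (fun s : ℂ => (n:ℂ) ^ (-s)) = fun s => Complex.exp (Complex.log n * (-s)) := by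
    ext s; rw [Complex.cpow_def_of_ne_zero hn0]
  rw [e]
  fun_prop

lemma auxP_diff (N : ℕ) : Differentiable ℂ (auxP N) := by
  intro s
  have : ContDiffAt ℂ (1:ℕ) (auxP N) s := by
    unfold auxP
    apply ContDiffAt.sum
    intro n hn
    exact auxP_contDiff N n hn 1 s
  exact this.differentiableAt (by simp)

lemma auxP_iter (N ℓ : ℕ) (σ t : ℝ) : iteratedDeriv ℓ (auxP N) (σ + t * Complex.I) = 
    ∑ n ∈ Finset.Icc 1 N, (((-Real.log n) ^ ℓ * (n:ℝ) ^ (-σ) : ℝ) : ℂ) *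
      Complex.exp (((-(t * Real.log n) : ℝ) : ℂ) * Complex.I) := by
  unfold auxP
  rw [iteratedDeriv_fun_sum (fun n hn => auxP_contDiff N n hn ℓ _)]
  refine Finset.sum_congr rfl fun n hn => ?_
  have hn1 := (Finset.mem_Icc.1 hn).1
  have hn0 : (n:ℂ) ≠ 0 := by exact_mod_cast (by omega : n ≠ 0)
  have e : (fun s : ℂ => (n:ℂ) ^ (-s)) = fun s => Complex.exp ((-Complex.log n) * s) := by
    ext s; rw [Complex.cpow_def_of_ne_zero hn0]; ring_nf
  rw [e, iteratedDeriv_cexp_const_mul]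
  have hp : (0:ℝ) < n := by exact_mod_cast hn1
  rw [Real.rpow_def_of_pos hp, ← Complex.natCast_log]
  push_cast
  rw [mul_assoc, ← Complex.exp_add]
  congr 2
  ring
end
section
open MeasureTheory Set

lemma aux_zeta_an : AnalyticOnNhd ℂ riemannZeta {1}ᶜ := by
  apply DifferentiableOn.analyticOnNhd _ isOpen_compl_singleton
  intro s hs
  exact (differentiableAt_riemannZeta hs).differentiableWithinAt

lemma aux_ne_one {σ : ℝ} (h : σ < 1) (t : ℝ) : (σ + t * Complex.I : ℂ) ≠ 1 := by
  intro e
  have := congrArg Complex.re e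
  simp at this
  linarith

lemma aux_zeta_cont (ℓ : ℕ) {σ : ℝ} (h : σ < 1) :
    Continuous fun t : ℝ => iteratedDeriv ℓ riemannZeta (σ + t * Complex.I) := by
  have h1 := (aux_zeta_an.iterated_deriv ℓ).continuousOn
  rw [← iteratedDeriv_eq_iterate] at h1
  exact h1.comp_continuous (by fun_prop) fun t => aux_ne_one h t

lemma auxP_cont (N ℓ : ℕ) (σ : ℝ) :
    Continuous fun t : ℝ => iteratedDeriv ℓ (auxP N) (σ + t * Complex.I) := by
  simp only [auxP_iter]
  fun_prop

lemma aux_err (ℓ : ℕ) {σ : ℝ} (h1 : 1 / 2 < σ) (h2 : σ < 1) {δ : ℝ} (hδ : 0 < δ) :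
    ∀ᶠ N : ℕ in atTop, ∀ᶠ T : ℝ in atTop,
      (∫ t in Ioc 0 T, ‖iteratedDeriv ℓ riemannZeta (σ + t * Complex.I) -
        iteratedDeriv ℓ (auxP N) (σ + t * Complex.I)‖ ^ 2) / T ≤ δ := by
  obtain ⟨r, hr, hr1, hr2⟩ : ∃ r : ℝ, 0 < r ∧ 1 / 2 < σ - r ∧ σ + r < 1 := by
    refine ⟨min ((σ - 1 / 2) / 2) ((1 - σ) / 2), lt_min (by linarith) (by linarith), ?_, ?_⟩
    · have := min_le_left ((σ - 1 / 2) / 2) ((1 - σ) / 2)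
      linarith
    · have := min_le_right ((σ - 1 / 2) / 2) ((1 - σ) / 2)
      linarith
  set K : ℝ := (ℓ.factorial / r ^ ℓ) ^ 2 * auxC (σ + r) with hK
  have hK0 : 0 ≤ K := mul_nonneg (by positivity) (auxC_pos hr2).le
  set p : ℝ := 2 - 2 * (σ - r) with hp
  have hp1 : p < 1 := by linarith
  have hp0 : 0 < p := by linarith
  have hR : Tendsto (fun N => K * (2 ^ p * 0 + 2 * auxR (σ - r) N)) atTop (nhds (K * (2 ^ p * 0 + 2 * 0))) :=
    (((auxR_tendsto (σ - r)).const_mul 2).const_add _).const_mul K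
  have hR2 : ∀ᶠ N in atTop, K * (2 ^ p * 0 + 2 * auxR (σ - r) N) < δ := 
    hR.eventually_lt_const (by simpa using hδ)
  filter_upwards [hR2] with N hN
  have hT : Tendsto (fun T : ℝ => K * (2 ^ p * T ^ (-(1 - p)) + 2 * auxR (σ - r) N)) atTop
      (nhds (K * (2 ^ p * 0 + 2 * auxR (σ - r) N))) :=
    (((tendsto_rpow_neg_atTop (by linarith : 0 < 1 - p)).const_mul (2 ^ p)).add_const _).const_mul K
  filter_upwards [hT.eventually_lt_const hN, eventually_ge_atTop 1, eventually_ge_atTop (N:ℝ)] with T hT1 hT2 hT3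
  refine le_trans ?_ hT1.le
  have hT0 : 0 < T := by linarith
  rw [div_le_iff₀ hT0]
  have hf : DifferentiableOn ℂ (riemannZeta - auxP N) {z | 1 / 2 < z.re ∧ z.re < 1} := by
    intro z hz
    have hz1 : z ≠ 1 := by
      rintro rfl
      have := hz.2
      simp at this
    exact ((differentiableAt_riemannZeta hz1).sub (auxP_diff N z)).differentiableWithinAt
  have key := aux_smooth (T := T) ℓ hr hr1 hr2 hT0.le hf
    (B := auxC (σ + r) * ((T + r) ^ p + (T + r) * auxR (σ - r) N)) (by
      intro σ' h3 h4
      exact aux_ms_two N hr1 hr2 h3 h4 (by linarith) (by linarith))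
  have e : ∀ t : ℝ, iteratedDeriv ℓ (riemannZeta - auxP N) (σ + t * Complex.I) = 
      iteratedDeriv ℓ riemannZeta (σ + t * Complex.I) - iteratedDeriv ℓ (auxP N) (σ + t * Complex.I) := by
    intro t
    apply iteratedDeriv_sub
    · exact (aux_zeta_an _ (aux_ne_one h2 t)).contDiffAt
    · exact (auxP_diff N).contDiff.contDiffAt
  simp only [e] at key
  refine key.trans ?_
  rw [← mul_assoc, ← hK, mul_assoc K]
  have hRn := auxR_nonneg (σ - r) N
  have q1 : (T + r) ^ p ≤ 2 ^ p * T ^ (-(1 - p)) * T := by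
    calc (T + r) ^ p ≤ (2 * T) ^ p := by
          apply Real.rpow_le_rpow (by positivity) (by linarith) hp0.le
      _ = 2 ^ p * T ^ p := Real.mul_rpow (by norm_num) hT0.le
      _ = 2 ^ p * (T ^ (-(1 - p)) * T ^ (1:ℝ)) := by
          rw [← Real.rpow_add hT0]; congr 2; ring
      _ = _ := by rw [Real.rpow_one]; ring
  have q2 : (T + r) * auxR (σ - r) N ≤ 2 * auxR (σ - r) N * T := by nlinarith
  apply mul_le_mul_of_nonneg_left _ hK0
  linarith

lemma aux_logMul (m n : ℕ) : LSeries.logMul^[m] 1 n = (Complex.log n) ^ m := by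
  induction m with
  | zero => simp
  | succ k ih => 
    rw [Function.iterate_succ_apply', LSeries.logMul, ih, pow_succ, mul_comm]

noncomputable def auxd (ℓ : ℕ) (σ : ℝ) (n : ℕ) : ℝ := ((-Real.log n) ^ ℓ * (n:ℝ) ^ (-σ)) ^ 2

lemma aux_coef {ℓ : ℕ} (hℓ : 1 ≤ ℓ) {σ : ℝ} (h1 : 1 / 2 < σ) :
    HasSum (auxd ℓ σ) (iteratedDeriv (2 * ℓ) riemannZeta ((2 * σ : ℝ) : ℂ)).re := by
  have hre : (1:ℝ) < (((2 * σ : ℝ) : ℂ)).re := by simp; linarith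
  have h0 : riemannZeta =ᶠ[nhds ((2 * σ : ℝ) : ℂ)] LSeries 1 := by
    have : {z : ℂ | 1 < z.re} ∈ nhds ((2 * σ : ℝ) : ℂ) :=
      (isOpen_lt continuous_const Complex.continuous_re).mem_nhds hre
    filter_upwards [this] with z hz
    exact (LSeries_one_eq_riemannZeta hz).symm
  have hab : LSeries.abscissaOfAbsConv 1 < ((((2 * σ : ℝ) : ℂ)).re : EReal) := by
    rw [LSeries.abscissaOfAbsConv_one]
    exact_mod_cast hre
  have habm : LSeries.abscissaOfAbsConv (LSeries.logMul^[2 * ℓ] 1) < ((((2 * σ : ℝ) : ℂ)).re : EReal) := by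
    have : ∀ m : ℕ, LSeries.abscissaOfAbsConv (LSeries.logMul^[m] 1) = LSeries.abscissaOfAbsConv 1 := by
      intro m
      induction m with
      | zero => simp
      | succ k ih => rw [Function.iterate_succ_apply', LSeries.abscissaOfAbsConv_logMul, ih]
    rw [this]; exact hab
  rw [h0.iteratedDeriv_eq, LSeries_iteratedDeriv _ hab]
  have hs := (LSeriesSummable_of_abscissaOfAbsConv_lt_re habm).hasSum
  have e : (-1 : ℂ) ^ (2 * ℓ) = 1 := by simp [pow_mul]
  rw [e, one_mul]
  have hs2 := Complex.hasSum_re hs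
  convert! hs2 using 1
  ext n
  rcases Nat.eq_zero_or_pos n with rfl | hn
  · simp [auxd, show ℓ ≠ 0 by omega]
  · rw [LSeries.term_of_ne_zero (by omega), aux_logMul, auxd]
    have hp : (0:ℝ) < n := by exact_mod_cast hn
    have e1 : (Complex.log n) ^ (2 * ℓ) / (n:ℂ) ^ ((2 * σ : ℝ) : ℂ) = 
        ((Real.log n ^ (2 * ℓ) / (n:ℝ) ^ (2 * σ) : ℝ) : ℂ) := by
      rw [← Complex.natCast_log]
      push_cast
      rw [Complex.ofReal_cpow hp.le]
      push_cast
      rfl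
    rw [e1, Complex.ofReal_re, mul_pow, ← pow_mul, mul_comm ℓ 2, Even.neg_pow (by simp), div_eq_mul_inv,
      ← Real.rpow_neg hp.le, ← Real.rpow_natCast ((n:ℝ) ^ (-σ)), ← Real.rpow_mul hp.le]
    congr 2
    push_cast
    ring

lemma aux_coef_pos {ℓ : ℕ} (hℓ : 1 ≤ ℓ) {σ : ℝ} (h1 : 1 / 2 < σ) :
    0 < (iteratedDeriv (2 * ℓ) riemannZeta ((2 * σ : ℝ) : ℂ)).re := by
  have h := aux_coef hℓ h1
  have h2 : 0 < auxd ℓ σ 2 := by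
    unfold auxd
    have : 0 < Real.log ((2:ℕ):ℝ) := Real.log_pos (by norm_num)
    have h3 : (-Real.log ((2:ℕ):ℝ)) ^ ℓ ≠ 0 := pow_ne_zero _ (by linarith)
    positivity
  exact h2.trans_le (le_hasSum h 2 fun n _ => sq_nonneg _)

lemma aux_coef_tendsto {ℓ : ℕ} (hℓ : 1 ≤ ℓ) {σ : ℝ} (h1 : 1 / 2 < σ) :
    Tendsto (fun N : ℕ => ∑ n ∈ Finset.Icc 1 N, auxd ℓ σ n) atTop
      (nhds (iteratedDeriv (2 * ℓ) riemannZeta ((2 * σ : ℝ) : ℂ)).re) := by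
  have h := ((aux_coef hℓ h1).tendsto_sum_nat).comp (tendsto_add_atTop_nat 1)
  refine h.congr fun N => ?_
  simp only [Function.comp]
  have h0 : auxd ℓ σ 0 = 0 := by simp [auxd, show ℓ ≠ 0 by omega]
  have e : Finset.range (N + 1) = insert 0 (Finset.Icc 1 N) := by
    ext; simp only [Finset.mem_range, Finset.mem_insert, Finset.mem_Icc]; omega
  rw [e, Finset.sum_insert (by simp), h0, zero_add]

lemma aux_sq_diff (a b : ℂ) {η : ℝ} (hη : 0 < η) :
    |‖a‖ ^ 2 - ‖b‖ ^ 2| ≤ (1 + 1 / η) * ‖a - b‖ ^ 2 + η * ‖b‖ ^ 2 := by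
  have h1 : |‖a‖ - ‖b‖| ≤ ‖a - b‖ := abs_norm_sub_norm_le a b
  have h2 : ‖a‖ ^ 2 - ‖b‖ ^ 2 = (‖a‖ - ‖b‖) ^ 2 + 2 * (‖a‖ - ‖b‖) * ‖b‖ := by ring
  have h3 : (‖a‖ - ‖b‖) ^ 2 ≤ ‖a - b‖ ^ 2 := sq_le_sq' (by linarith [abs_le.1 h1]) (abs_le.1 h1).2
  have h4 : 2 * ‖a - b‖ * ‖b‖ ≤ 1 / η * ‖a - b‖ ^ 2 + η * ‖b‖ ^ 2 := by
    have : 0 ≤ (1 / η) * (‖a - b‖ - η * ‖b‖) ^ 2 := by positivity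
    have e : (1 / η) * (‖a - b‖ - η * ‖b‖) ^ 2 = 1 / η * ‖a - b‖ ^ 2 - 2 * ‖a - b‖ * ‖b‖ + η * ‖b‖ ^ 2 := by
      field_simp
      ring
    linarith
  have h5 : |(‖a‖ - ‖b‖) * ‖b‖| ≤ ‖a - b‖ * ‖b‖ := by
    rw [abs_mul, abs_of_nonneg (norm_nonneg b)]
    gcongr
  rw [abs_le] at h5 ⊢
  constructor <;> nlinarith [sq_nonneg (‖a‖ - ‖b‖), h5.1, h5.2]

lemma aux_int_diff {F P : ℝ → ℂ} (hF : Continuous F) (hP : Continuous P) {η T : ℝ} (hη : 0 < η) (hT : 0 < T) :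
    |(∫ t in Ioc 0 T, ‖F t‖ ^ 2) / T - (∫ t in Ioc 0 T, ‖P t‖ ^ 2) / T| ≤
      (1 + 1 / η) * ((∫ t in Ioc 0 T, ‖F t - P t‖ ^ 2) / T) + η * ((∫ t in Ioc 0 T, ‖P t‖ ^ 2) / T) := by
  have i1 : IntegrableOn (fun t => ‖F t‖ ^ 2) (Ioc 0 T) := (hF.norm.pow 2).integrableOn_Ioc
  have i2 : IntegrableOn (fun t => ‖P t‖ ^ 2) (Ioc 0 T) := (hP.norm.pow 2).integrableOn_Ioc
  have i3 : IntegrableOn (fun t => ‖F t - P t‖ ^ 2) (Ioc 0 T) := ((hF.sub hP).norm.pow 2).integrableOn_Ioc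
  have h : |∫ t in Ioc 0 T, (‖F t‖ ^ 2 - ‖P t‖ ^ 2)| ≤ 
      ∫ t in Ioc 0 T, ((1 + 1 / η) * ‖F t - P t‖ ^ 2 + η * ‖P t‖ ^ 2) := by
    refine (abs_integral_le_integral_abs).trans ?_
    apply integral_mono (i1.sub i2).abs ((i3.const_mul _).add (i2.const_mul _))
    intro t
    exact aux_sq_diff _ _ hη
  rw [integral_sub i1 i2, integral_add (i3.const_mul _) (i2.const_mul _), integral_const_mul,
    integral_const_mul] at h
  rw [← sub_div, abs_div, abs_of_pos hT, div_le_iff₀ hT]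
  refine h.trans (le_of_eq ?_)
  field_simp

lemma aux_final {ℓ : ℕ} (hℓ : 1 ≤ ℓ) {σ : ℝ} (h1 : 1 / 2 < σ) (h2 : σ < 1) :
    Tendsto (fun T : ℝ => (∫ t in Ioc 0 T, ‖iteratedDeriv ℓ riemannZeta (σ + t * Complex.I)‖ ^ 2) / T)
      atTop (nhds (iteratedDeriv (2 * ℓ) riemannZeta ((2 * σ : ℝ) : ℂ)).re) := by
  set c := (iteratedDeriv (2 * ℓ) riemannZeta ((2 * σ : ℝ) : ℂ)).re with hc
  have hc0 : 0 < c := aux_coef_pos hℓ h1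
  rw [Metric.tendsto_nhds]
  intro ε hε
  set η := ε / (8 * (c + ε)) with hη
  have hη0 : 0 < η := by positivity
  set δ := ε / (8 * (1 + 1 / η)) with hδ
  have hδ0 : 0 < δ := by positivity
  have hcN := (Metric.tendsto_nhds.1 (aux_coef_tendsto hℓ h1)) (ε / 8) (by positivity)
  obtain ⟨N, hN1, hN2⟩ := (hcN.and (aux_err ℓ h1 h2 hδ0)).exists
  have hmv := aux_mv N (fun n => (-Real.log n) ^ ℓ * (n:ℝ) ^ (-σ))
  simp only [← auxP_iter] at hmv
  filter_upwards [hN2, Metric.tendsto_nhds.1 hmv (ε / 8) (by positivity), eventually_gt_atTop 0] with T hT1 hT2 hT3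
  have hd := aux_int_diff (aux_zeta_cont ℓ h2) (auxP_cont N ℓ σ) hη0 hT3
  rw [Real.dist_eq] at hN1 hT2 ⊢
  change |_ - ∑ n ∈ Finset.Icc 1 N, auxd ℓ σ n| < _ at hT2
  set A := (∫ t in Ioc 0 T, ‖iteratedDeriv ℓ riemannZeta (σ + t * Complex.I)‖ ^ 2) / T
  set B := (∫ t in Ioc 0 T, ‖iteratedDeriv ℓ (auxP N) (σ + t * Complex.I)‖ ^ 2) / T
  have b1 : (1 + 1 / η) * ((∫ t in Ioc 0 T, ‖iteratedDeriv ℓ riemannZeta (σ + t * Complex.I) -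
        iteratedDeriv ℓ (auxP N) (σ + t * Complex.I)‖ ^ 2) / T) ≤ ε / 8 := by
    calc _ ≤ (1 + 1 / η) * δ := by gcongr
      _ = ε / 8 := by rw [hδ]; field_simp
  rw [abs_lt] at hN1 hT2
  have b2 : η * B ≤ ε / 8 := by
    calc η * B ≤ η * (c + ε) := by gcongr; linarith [hN1.2, hT2.2]
      _ = ε / 8 := by rw [hη]; field_simp
  have b3 := abs_le.1 (hd.trans (add_le_add b1 b2))
  rw [abs_lt]
  constructor <;> linarith [b3.1, b3.2, hN1.1, hN1.2, hT2.1, hT2.2]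
end

theorem second_moment_deriv_zeta_strip (ℓ : ℕ) (hℓ : 1 ≤ ℓ) (σ : ℝ)
    (hσ : σ ∈ Set.Ioo (1 / 2 : ℝ) 1) :
    Filter.Tendsto
      (fun T : ℝ =>
        (∫ t in Set.Ioc (0 : ℝ) T,
            ‖iteratedDeriv ℓ riemannZeta ((σ : ℂ) + (t : ℂ) * Complex.I)‖ ^ 2) /
          ((iteratedDeriv (2 * ℓ) riemannZeta ((2 * σ : ℝ) : ℂ)).re * T))
      Filter.atTop (nhds 1) := by
  have h := aux_final hℓ hσ.1 hσ.2
  have hc := aux_coef_pos hℓ hσ.1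
  have h2 := h.div_const (iteratedDeriv (2 * ℓ) riemannZeta ((2 * σ : ℝ) : ℂ)).re
  rw [div_self hc.ne'] at h2
  refine h2.congr fun T => ?_
  rw [div_div, mul_comm T]
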